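/- Let v : Fin (d+1) → EuclideanSpace ℝ (Fin d) be affinely independent (d ≥ 1) with simplex T = conv(range v), and for each i let Nᵢ = {x : ∀ p ∈ T, ⟪x, p − v i⟫ ≤ 0} be the normal cone of T at the vertex v i. Then the cones Nᵢ cover ℝ^d, their pairwise intersections have (d−1)-dimensional Hausdorff-null intersection with the unit sphere, and consequently the sum over i of the (d−1)-dimensional Hausdorff measures of Nᵢ ∩ S^{d−1} equals the total (d−1)-dimensional Hausdorff measure of the unit sphere S^{d−1}. -/

import Mathlib

/-! A linear functional attains its maximum over a simplex at a vertex, so the normal cones cover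
the space. If `x` lies in the normal cones at both `v i` and `v j`, then `⟪x, v i - v j⟫ = 0`, so
the overlap of the two cones with the sphere lies in the unit sphere of the hyperplane
`(v i - v j)ᗮ`. On this hyperplane, of dimension `d - 1`, the Hausdorff measure `μH[d - 1]` is an
additive Haar measure, for which spheres are null (`hausdorffMeasure_hyperplane_inter_sphere`).
Additivity of the measure over an almost disjoint family then gives the sum formula. -/

open MeasureTheory
open scoped ENNReal RealInnerProductSpace

/-- The normal cone of a convex body `T` at a point `v`. -/
def normalCone {d : ℕ} (T : Set (EuclideanSpace ℝ (Fin d)))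
    (v : EuclideanSpace ℝ (Fin d)) : Set (EuclideanSpace ℝ (Fin d)) :=
  {x | ∀ p ∈ T, ⟪x, p - v⟫ ≤ 0}

lemma isClosed_normalCone {d : ℕ} (T : Set (EuclideanSpace ℝ (Fin d)))
    (v : EuclideanSpace ℝ (Fin d)) : IsClosed (normalCone T v) := by
  simp only [normalCone, Set.ofPred_forall]
  exact isClosed_biInter fun p _ => isClosed_le (by fun_prop) continuous_const

lemma mem_normalCone_convexHull {d : ℕ} {S : Set (EuclideanSpace ℝ (Fin d))}
    {v x : EuclideanSpace ℝ (Fin d)} :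
    x ∈ normalCone (convexHull ℝ S) v ↔ ∀ p ∈ S, ⟪x, p⟫ ≤ ⟪x, v⟫ := by
  simp only [normalCone, Set.mem_ofPred_eq, inner_sub_right, sub_nonpos]
  refine ⟨fun h p hp => h p (subset_convexHull ℝ S hp), fun h p hp => ?_⟩
  exact convexHull_min (t := {p | ⟪x, p⟫ ≤ ⟪x, v⟫}) h
    (convex_halfSpace_le (innerSL ℝ x).toLinearMap.isLinear _) hp

/-- A great subsphere is null for the `(d - 1)`-dimensional Hausdorff measure. The case `d = 1`
is included: the hyperplane is then `{0}` and does not meet the sphere. -/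
lemma hausdorffMeasure_hyperplane_inter_sphere {d : ℕ} (hd : 1 ≤ d)
    {w : EuclideanSpace ℝ (Fin d)} (hw : w ≠ 0) :
    μH[(d : ℝ) - 1] ({x : EuclideanSpace ℝ (Fin d) | ⟪x, w⟫ = 0} ∩
      Metric.sphere (0 : EuclideanSpace ℝ (Fin d)) 1) = 0 := by
  obtain ⟨n, rfl⟩ : ∃ n, d = n + 1 := ⟨d - 1, by omega⟩
  let W : Submodule ℝ (EuclideanSpace ℝ (Fin (n + 1))) := (ℝ ∙ w)ᗮ
  have hfin : Module.finrank ℝ W = n := by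
    have : Fact (Module.finrank ℝ (EuclideanSpace ℝ (Fin (n + 1))) = n + 1) := ⟨by simp⟩
    exact Submodule.finrank_orthogonal_span_singleton hw
  have himage : {x : EuclideanSpace ℝ (Fin (n + 1)) | ⟪x, w⟫ = 0} ∩
      Metric.sphere (0 : EuclideanSpace ℝ (Fin (n + 1))) 1 =
      ((↑) : W → EuclideanSpace ℝ (Fin (n + 1))) '' Metric.sphere (0 : W) 1 := by
    ext x
    simp [W, Submodule.mem_orthogonal_singleton_iff_inner_left, and_comm]
  have hexp : ((n + 1 : ℕ) : ℝ) - 1 = (Module.finrank ℝ W : ℝ) := by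
    rw [hfin]; push_cast; ring
  rw [himage, hexp, isometry_subtype_coe.hausdorffMeasure_image (Or.inl (by positivity))]
  exact Measure.addHaar_sphere_of_ne_zero _ _ one_ne_zero

/-- For a nondegenerate simplex in `ℝ^d`, the normal cones at the vertices cover `ℝ^d`,
their pairwise intersections meet the unit sphere in `(d-1)`-Hausdorff-null sets, and the
spherical measures of the normal cones add up to the total measure of the sphere. -/
theorem normal_fan_partitions_sphere
    (d : ℕ) (hd : 1 ≤ d)
    (v : Fin (d + 1) → EuclideanSpace ℝ (Fin d))
    (hv : AffineIndependent ℝ v) :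
    (⋃ i, normalCone (convexHull ℝ (Set.range v)) (v i)) = Set.univ ∧
    (∀ i j, i ≠ j →
      μH[(d : ℝ) - 1] (normalCone (convexHull ℝ (Set.range v)) (v i) ∩
        normalCone (convexHull ℝ (Set.range v)) (v j) ∩
        Metric.sphere (0 : EuclideanSpace ℝ (Fin d)) 1) = 0) ∧
    (∑ i : Fin (d + 1),
        μH[(d : ℝ) - 1] (normalCone (convexHull ℝ (Set.range v)) (v i) ∩
          Metric.sphere (0 : EuclideanSpace ℝ (Fin d)) 1)) =
      μH[(d : ℝ) - 1] (Metric.sphere (0 : EuclideanSpace ℝ (Fin d)) 1) := by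
  set T := convexHull ℝ (Set.range v) with hT
  have hcover : (⋃ i, normalCone T (v i)) = Set.univ := by
    refine Set.eq_univ_of_forall fun x => Set.mem_iUnion.2 ?_
    obtain ⟨i, hi⟩ := Finite.exists_max fun i => ⟪x, v i⟫
    exact ⟨i, mem_normalCone_convexHull.2 (Set.forall_mem_range.2 hi)⟩
  have hnull : ∀ i j, i ≠ j →
      μH[(d : ℝ) - 1] (normalCone T (v i) ∩ normalCone T (v j) ∩
        Metric.sphere (0 : EuclideanSpace ℝ (Fin d)) 1) = 0 := by
    intro i j hij
    refine measure_mono_null (Set.inter_subset_inter_left _ ?_)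
      (hausdorffMeasure_hyperplane_inter_sphere hd (sub_ne_zero.2 (hv.injective.ne hij)))
    rintro x ⟨hi, hj⟩
    rw [hT, mem_normalCone_convexHull] at hi hj
    rw [Set.mem_ofPred_eq, inner_sub_right, sub_eq_zero]
    exact le_antisymm (hj _ ⟨i, rfl⟩) (hi _ ⟨j, rfl⟩)
  refine ⟨hcover, hnull, ?_⟩
  rw [← tsum_fintype (L := .unconditional _), ← measure_iUnion₀, ← Set.iUnion_inter, hcover,
    Set.univ_inter]
  · intro i j hij
    simpa only [Function.onFun, AEDisjoint, ← Set.inter_inter_distrib_right] using hnull i j hij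
  · exact fun i =>
      ((isClosed_normalCone _ _).inter Metric.isClosed_sphere).measurableSet.nullMeasurableSet
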